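/- Let A be a unique representation basis of the integers and let n be a positive integer. For each integer ℓ with 1 ≤ ℓ ≤ n, let N_ℓ be the number of elements of A in the interval ((ℓ−1)n, ℓn] and let M_ℓ be the number of elements of A in the interval [−ℓn, (−ℓ+1)n). Then N_ℓ · M_ℓ < 2n for every ℓ with 1 ≤ ℓ ≤ n. -/

import Mathlib

open Filter Set

/-- `repCount A n` is the number of representations of `n` as `a + a'` with
`a ≤ a'` and `a, a' ∈ A`. -/
noncomputable def repCount (A : Set ℤ) (n : ℤ) : ℕ :=
  {p : ℤ × ℤ | p.1 ∈ A ∧ p.2 ∈ A ∧ p.1 ≤ p.2 ∧ p.1 + p.2 = n}.ncard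

/-- `A` is a unique representation basis of `ℤ` if `r_A(n) = 1` for all `n`. -/
def IsUniqueRepBasis (A : Set ℤ) : Prop := ∀ n : ℤ, repCount A n = 1

/-- `countIn A y x` is the number of elements of `A` in the real interval `[y, x]`. -/
noncomputable def countIn (A : Set ℤ) (y x : ℝ) : ℕ :=
  {a : ℤ | a ∈ A ∧ y ≤ (a : ℝ) ∧ (a : ℝ) ≤ x}.ncard

open scoped Pointwise

/-- A Sidon set: a sum of two elements of `A` determines its summands up to order. This is the
uniqueness half of `IsUniqueRepBasis`, stated for unordered pairs so that `α` needs no order. -/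
def IsSidon {α : Type*} [Add α] (A : Set α) : Prop :=
  ∀ ⦃a b c d⦄, a ∈ A → b ∈ A → c ∈ A → d ∈ A → a + b = c + d → a = c ∧ b = d ∨ a = d ∧ b = c

theorem IsSidon.ncard_add_of_disjoint {α : Type*} [Add α] {A S T : Set α} (hA : IsSidon A)
    (hS : S ⊆ A) (hT : T ⊆ A) (hST : Disjoint S T) :
    (S + T).ncard = S.ncard * T.ncard := by
  have hinj : (S ×ˢ T).InjOn fun p ↦ p.1 + p.2 := by
    rintro ⟨a, b⟩ ⟨ha, hb⟩ ⟨c, d⟩ ⟨hc, hd⟩ hsum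
    rcases hA (hS ha) (hT hb) (hS hc) (hT hd) hsum with ⟨hac, hbd⟩ | ⟨had, -⟩
    · exact Prod.ext hac hbd
    · exact absurd had (hST.ne_of_mem ha hd)
  rw [← add_image_prod, hinj.ncard_image, ncard_prod]

theorem IsUniqueRepBasis.isSidon {A : Set ℤ} (hA : IsUniqueRepBasis A) : IsSidon A := by
  intro a b c d ha hb hc hd hsum
  obtain ⟨q, hq⟩ := ncard_eq_one.mp (hA (a + b))
  have sorted_eq {x y : ℤ} (hx : x ∈ A) (hy : y ∈ A) (hxy : x + y = a + b) :
      (min x y, max x y) = q := by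
    rw [← mem_singleton_iff, ← hq]
    exact ⟨min_rec' (· ∈ A) hx hy, max_rec' (· ∈ A) hx hy, min_le_max, (min_add_max x y).trans hxy⟩
  have hmin : min a b = min c d :=
    congrArg Prod.fst ((sorted_eq ha hb rfl).trans (sorted_eq hc hd hsum.symm).symm)
  lia

theorem urb_mul_lt_general {A : Set ℤ} (hA : IsSidon A) {a b c d : ℤ}
    (hdisj : Disjoint (Ioc a b) (Ico c d)) (hlt : a + c < b + d) :
    ((A ∩ Ioc a b).ncard * (A ∩ Ico c d).ncard : ℤ) < (b - a) + (d - c) := by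
  -- Opening the intervals at opposite ends makes the sums avoid both `a + c` and `b + d`.
  have hsub : A ∩ Ioc a b + A ∩ Ico c d ⊆ Ioo (a + c) (b + d) :=
    (add_subset_add inter_subset_right inter_subset_right).trans (Ioc_add_Ico_subset a b c d)
  have hcard : ((Ioo (a + c) (b + d)).ncard : ℤ) = (b + d) - (a + c) - 1 := by
    rw [← Finset.coe_Ioo, ncard_coe_finset, Int.card_Ioo_of_lt _ _ hlt]
  calc ((A ∩ Ioc a b).ncard * (A ∩ Ico c d).ncard : ℤ)
      = (A ∩ Ioc a b + A ∩ Ico c d).ncard := by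
        rw [hA.ncard_add_of_disjoint inter_subset_left inter_subset_left
          (hdisj.mono inter_subset_right inter_subset_right), Nat.cast_mul]
    _ ≤ (Ioo (a + c) (b + d)).ncard := mod_cast ncard_le_ncard hsub (finite_Ioo _ _)
    _ < (b - a) + (d - c) := by lia

/-- For a unique representation basis, `N_ℓ · M_ℓ < 2n` for every `1 ≤ ℓ ≤ n`. -/
theorem urb_mul_lt (A : Set ℤ) (hA : IsUniqueRepBasis A) (n : ℕ) (hn : 0 < n)
    (N M : ℕ → ℕ)
    (hN : ∀ ℓ : ℕ, N ℓ = {a : ℤ | a ∈ A ∧ ((ℓ : ℤ) - 1) * n < a ∧ a ≤ (ℓ : ℤ) * n}.ncard)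
    (hM : ∀ ℓ : ℕ, M ℓ = {a : ℤ | a ∈ A ∧ -((ℓ : ℤ) * n) ≤ a ∧ a < (-(ℓ : ℤ) + 1) * n}.ncard) :
    ∀ ℓ : ℕ, 1 ≤ ℓ → ℓ ≤ n → N ℓ * M ℓ < 2 * n := by
  intro ℓ hℓ _
  have hnonneg : 0 ≤ ((ℓ : ℤ) - 1) * n := mul_nonneg (by lia) n.cast_nonneg
  have hdisj : Disjoint (Ioc (((ℓ : ℤ) - 1) * n) (ℓ * n)) (Ico (-((ℓ : ℤ) * n)) ((-ℓ + 1) * n)) :=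
    disjoint_left.mpr fun x hx hx' ↦ by linarith [hx.1, hx'.2]
  have hbound := urb_mul_lt_general hA.isSidon hdisj (by linarith)
  rw [hN, hM]
  zify
  exact hbound.trans_eq (by ring)
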